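/- Every bimatrix game (Z₁, Z₂) with Z₁, Z₂ ∈ ℝ^{l×m} has at least one Nash equilibrium in mixed strategies. -/

import Mathlib

/-- Scarf dominance. -/
def ScDom {I V : Type} (r : I → V → ℕ) (S : Finset V) : Prop :=
  ∀ y, ∃ i, ∀ x ∈ S, r i y ≤ r i x

theorem sperner_even {I V : Type} [Fintype I] [DecidableEq I] [DecidableEq V]
    (c : V → I) (i0 : I) (S : Finset V) (hS : S.card = Fintype.card I)
    (hne : S.image c ≠ Finset.univ) :
    Even (S.filter (fun v => (S.erase v).image c = Finset.univ.erase i0)).card := by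
  classical
  rcases Finset.eq_empty_or_nonempty
    (S.filter (fun v => (S.erase v).image c = Finset.univ.erase i0)) with h | ⟨v, hv⟩
  · simp [h]
  rw [Finset.mem_filter] at hv
  obtain ⟨hvS, hv⟩ := hv
  have hinj : Set.InjOn c (S.erase v : Finset V) := by
    rw [← Finset.card_image_iff, hv, Finset.card_erase_of_mem hvS,
      Finset.card_erase_of_mem (Finset.mem_univ _), hS, Finset.card_univ]
  have hcv : c v ≠ i0 := by
    intro h
    apply hne
    rw [← Finset.insert_erase hvS, Finset.image_insert, hv, h, Finset.insert_erase (Finset.mem_univ _)]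
  have : c v ∈ (S.erase v).image c := by rw [hv]; simp [hcv]
  obtain ⟨v', hv', hcc⟩ := Finset.mem_image.1 this
  have hne' := Finset.ne_of_mem_erase hv'
  have hv'S := Finset.mem_of_mem_erase hv'
  have : S.filter (fun v => (S.erase v).image c = Finset.univ.erase i0) = {v, v'} := by
    ext u
    simp only [Finset.mem_filter, Finset.mem_insert, Finset.mem_singleton]
    constructor
    · rintro ⟨huS, hu⟩
      by_contra hcon
      push Not at hcon
      have huv : u ∈ S.erase v := Finset.mem_erase.2 ⟨hcon.1, huS⟩
      have h1 : c u ∈ (S.erase v).image c := Finset.mem_image_of_mem _ huv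
      rw [hv, ← hu] at h1
      obtain ⟨w, hw, hwu⟩ := Finset.mem_image.1 h1
      have hwne := Finset.ne_of_mem_erase hw
      have hwS := Finset.mem_of_mem_erase hw
      by_cases hwv : w = v
      · subst hwv
        exact hcon.2 (hinj huv hv' (by rw [hcc, hwu]))
      · exact hwne (hinj (Finset.mem_coe.2 (Finset.mem_erase.2 ⟨hwv, hwS⟩)) huv hwu)
    · rintro (rfl | rfl)
      · exact ⟨hvS, hv⟩
      · refine ⟨hv'S, ?_⟩
        rw [← hv]
        ext a
        simp only [Finset.mem_image, Finset.mem_erase]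
        constructor
        · rintro ⟨x, ⟨h1, h2⟩, rfl⟩
          by_cases hx : x = v
          · subst hx; exact ⟨u, ⟨hne', hv'S⟩, hcc⟩
          · exact ⟨x, ⟨hx, h2⟩, rfl⟩
        · rintro ⟨x, ⟨h1, h2⟩, rfl⟩
          by_cases hx : x = u
          · subst hx; exact ⟨v, ⟨hne'.symm, hvS⟩, hcc.symm⟩
          · exact ⟨x, ⟨hx, h2⟩, rfl⟩
  rw [this, Finset.card_pair hne'.symm]
  exact even_two

theorem door_even {I V : Type} [Fintype I] [DecidableEq I] [Fintype V] [DecidableEq V]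
    (r : I → V → ℕ) (hr : ∀ i, Function.Injective (r i)) (e : I → V)
    (h2 : ∀ i k, i ≠ k → ∀ v, v ∉ Set.range e → r k v < r k (e i))
    (S : Finset V) (hS : S.card + 1 = Fintype.card I) (w : V) (hwS : w ∈ S)
    (hw : w ∉ Set.range e) [DecidablePred fun v => v ∉ S ∧ ScDom r (insert v S)] :
    Even (Finset.univ.filter (fun v => v ∉ S ∧ ScDom r (insert v S))).card := by
  classical
  rcases Finset.eq_empty_or_nonempty
    (Finset.univ.filter (fun v => v ∉ S ∧ ScDom r (insert v S))) with h | ⟨v0, hv0⟩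
  · simp [h]
  have hD : ScDom r S := by
    intro y
    obtain ⟨i, hi⟩ := (Finset.mem_filter.1 hv0).2.2 y
    exact ⟨i, fun x hx => hi x (Finset.mem_insert_of_mem hx)⟩
  have hmin : ∀ i, ∃ x ∈ S, ∀ y ∈ S, r i x ≤ r i y := fun i =>
    Finset.exists_min_image S (r i) ⟨w, hwS⟩
  choose mn hmS hmle using hmin
  obtain ⟨i, -, j, -, hij, hmij⟩ :=
    Finset.exists_ne_map_eq_of_card_lt_of_maps_to (s := (Finset.univ : Finset I)) (t := S)
      (f := mn) (by rw [Finset.card_univ]; omega) (fun i _ => hmS i)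
  have hsurj : ∀ x ∈ S, ∃ l, mn l = x := by
    intro x hx
    obtain ⟨l, hl⟩ := hD x
    exact ⟨l, hr l (le_antisymm (hmle l x hx) (hl _ (hmS l)))⟩
  let M : I → Finset V := fun i => Finset.univ.filter (fun y => ∀ k, k ≠ i → r k (mn k) < r k y)
  have hM : ∀ i y, y ∈ M i ↔ ∀ k, k ≠ i → r k (mn k) < r k y := by
    intro i y; simp [M]
  have hMne : ∀ i, (M i).Nonempty := fun i =>
    ⟨e i, (hM _ _).2 fun k hk => lt_of_le_of_lt (hmle k w hwS) (h2 i k hk.symm w hw)⟩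
  have hMl : ∀ i y, y ∈ M i → r i y ≤ r i (mn i) := by
    intro i y hy
    obtain ⟨l, hl⟩ := hD y
    by_cases h : l = i
    · subst h; exact hl _ (hmS _)
    · exact absurd (hl _ (hmS l)) (not_le.2 ((hM _ _).1 hy l h))
  -- maximal elements of `M i` give rooms
  have hback : ∀ i j, i ≠ j → mn i = mn j → ∀ v ∈ M i, (∀ y ∈ M i, r i y ≤ r i v) →
      v ∉ S ∧ ScDom r (insert v S) := by
    intro i j hij hmij v hv hmax
    have hvM := (hM _ _).1 hv
    constructor
    · intro hvS
      obtain ⟨l, hl⟩ := hsurj v hvS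
      by_cases h : l = i
      · have := hvM j hij.symm
        rw [← hl, h, hmij] at this
        exact lt_irrefl _ this
      · have := hvM l h
        rw [hl] at this
        exact lt_irrefl _ this
    · intro y
      by_cases hy : y ∈ M i
      · refine ⟨i, fun x hx => ?_⟩
        rcases Finset.mem_insert.1 hx with rfl | hx
        · exact hmax y hy
        · exact (hMl i y hy).trans (hmle i x hx)
      · rw [hM] at hy
        push Not at hy
        obtain ⟨l, hl, hle⟩ := hy
        refine ⟨l, fun x hx => ?_⟩
        rcases Finset.mem_insert.1 hx with rfl | hx
        · exact hle.trans (hvM l hl).le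
        · exact hle.trans (hmle l x hx)
  have hforw : ∀ v, v ∉ S → ScDom r (insert v S) →
      ∃ k, (k = i ∨ k = j) ∧ v ∈ M k ∧ ∀ y ∈ M k, r k y ≤ r k v := by
    intro v hvS hv
    obtain ⟨k, hk⟩ := hv v
    have hlt : ∀ x ∈ S, r k v < r k x := by
      intro x hx
      refine lt_of_le_of_ne (hk x (Finset.mem_insert_of_mem hx)) fun h => ?_
      exact hvS (hr k h ▸ hx)
    have hwit : ∀ x ∈ S, ∃ l, l ≠ k ∧ mn l = x ∧ r l x ≤ r l v := by
      intro x hx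
      obtain ⟨l, hl⟩ := hv x
      refine ⟨l, ?_, ?_, hl v (Finset.mem_insert_self _ _)⟩
      · rintro rfl
        exact absurd (hl v (Finset.mem_insert_self _ _)) (not_le.2 (hlt x hx))
      · exact hr l (le_antisymm (hmle l x hx) (hl _ (Finset.mem_insert_of_mem (hmS l))))
    have himg : (Finset.univ.erase k).image mn = S := by
      ext x
      simp only [Finset.mem_image, Finset.mem_erase, Finset.mem_univ, and_true]
      constructor
      · rintro ⟨l, -, rfl⟩; exact hmS l
      · intro hx
        obtain ⟨l, h1, h3, -⟩ := hwit x hx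
        exact ⟨l, h1, h3⟩
    have hinj : Set.InjOn mn (Finset.univ.erase k : Finset I) := by
      rw [← Finset.card_image_iff, himg, Finset.card_erase_of_mem (Finset.mem_univ _),
        Finset.card_univ]
      omega
    refine ⟨k, ?_, ?_, ?_⟩
    · by_contra hcon
      push Not at hcon
      exact hij (hinj (by simp [hcon.1.symm]) (by simp [hcon.2.symm]) hmij)
    · rw [hM]
      intro l hl
      obtain ⟨l', h1, h3, h4⟩ := hwit (mn l) (hmS l)
      have : l' = l := hinj (by simp [h1]) (by simp [hl]) h3
      subst this
      refine lt_of_le_of_ne h4 fun h => ?_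
      exact hvS (hr _ h ▸ hmS _)
    · intro y hy
      obtain ⟨l, hl⟩ := hv y
      by_cases h : l = k
      · subst h; exact hl v (Finset.mem_insert_self _ _)
      · exact absurd (hl _ (Finset.mem_insert_of_mem (hmS l))) (not_le.2 ((hM _ _).1 hy l h))
  obtain ⟨a, haM, hamax⟩ := Finset.exists_max_image (M i) (r i) (hMne i)
  obtain ⟨b, hbM, hbmax⟩ := Finset.exists_max_image (M j) (r j) (hMne j)
  have hab : a ≠ b := by
    rintro rfl
    have := (hM _ _).1 hbM i hij
    exact absurd (hMl i a haM) (not_le.2 this)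
  have : Finset.univ.filter (fun v => v ∉ S ∧ ScDom r (insert v S)) = {a, b} := by
    ext v
    simp only [Finset.mem_filter, Finset.mem_univ, true_and, Finset.mem_insert,
      Finset.mem_singleton]
    constructor
    · rintro ⟨h1, h3⟩
      obtain ⟨k, rfl | rfl, hk, hmax⟩ := hforw v h1 h3
      · left; exact hr _ (le_antisymm (hamax v hk) (hmax a haM))
      · right; exact hr _ (le_antisymm (hbmax v hk) (hmax b hbM))
    · rintro (rfl | rfl)
      · exact hback i j hij hmij _ haM hamax
      · exact hback j i hij.symm hmij.symm _ hbM hbmax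
  rw [this, Finset.card_pair hab]
  exact even_two

theorem outer_door {I V : Type} [Fintype I] [DecidableEq I] [Fintype V] [DecidableEq V]
    (r : I → V → ℕ) (hr : ∀ i, Function.Injective (r i)) (e : I → V)
    (h1 : ∀ i v, r i (e i) ≤ r i v)
    (h2 : ∀ i k, i ≠ k → ∀ v, v ∉ Set.range e → r k v < r k (e i))
    (i0 : I) (w : V) (hw : w ∉ Set.range e)
    [DecidablePred fun v => v ∉ (Finset.univ.erase i0).image e ∧
      ScDom r (insert v ((Finset.univ.erase i0).image e))] :
    (Finset.univ.filter (fun v => v ∉ (Finset.univ.erase i0).image e ∧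
      ScDom r (insert v ((Finset.univ.erase i0).image e)))).card = 1 := by
  classical
  have hmem : ∀ k, k ≠ i0 → e k ∈ (Finset.univ.erase i0).image e := fun k hk =>
    Finset.mem_image_of_mem _ (by simp [hk])
  have hno : ∀ y, y ∉ Set.range e → ∀ k, ¬ r k y ≤ r k (e k) := by
    intro y hy k h
    exact hy ⟨k, hr k (le_antisymm (h1 k y) h)⟩
  obtain ⟨a, ha, hamax⟩ := Finset.exists_max_image
    (Finset.univ.filter (fun v => v ∉ Set.range e)) (r i0) ⟨w, by simpa using hw⟩
  have ha' : a ∉ Set.range e := (Finset.mem_filter.1 ha).2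
  have hamax' : ∀ y, y ∉ Set.range e → r i0 y ≤ r i0 a := fun y hy =>
    hamax y (Finset.mem_filter.2 ⟨Finset.mem_univ _, hy⟩)
  rw [Finset.card_eq_one]
  refine ⟨a, ?_⟩
  ext v
  simp only [Finset.mem_filter, Finset.mem_univ, true_and, Finset.mem_singleton]
  constructor
  · rintro ⟨hv, hdom⟩
    obtain ⟨l, hl⟩ := hdom a
    have hl0 : l = i0 := by
      by_contra h
      exact hno a ha' l (hl _ (Finset.mem_insert_of_mem (hmem l h)))
    subst hl0
    have hav := hl v (Finset.mem_insert_self _ _)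
    have hvr : v ∉ Set.range e := by
      rintro ⟨k, rfl⟩
      by_cases hk : k = l
      · subst hk; exact hno a ha' k hav
      · exact hv (hmem k hk)
    exact hr _ (le_antisymm (hamax' v hvr) hav)
  · rintro rfl
    constructor
    · intro h
      obtain ⟨k, -, hk⟩ := Finset.mem_image.1 h
      exact ha' ⟨k, hk⟩
    · intro y
      by_cases hy : y ∈ Set.range e
      · obtain ⟨k, rfl⟩ := hy
        exact ⟨k, fun x _ => h1 k x⟩
      · refine ⟨i0, fun x hx => ?_⟩
        rcases Finset.mem_insert.1 hx with rfl | hx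
        · exact hamax' y hy
        · obtain ⟨k, hk, rfl⟩ := Finset.mem_image.1 hx
          exact (h2 k i0 (Finset.ne_of_mem_erase hk) y hy).le

theorem scarf_abstract {I V : Type} [Fintype I] [DecidableEq I] [Fintype V] [DecidableEq V]
    (r : I → V → ℕ) (hr : ∀ i, Function.Injective (r i)) (e : I → V)
    (h1 : ∀ i v, r i (e i) ≤ r i v)
    (h2 : ∀ i k, i ≠ k → ∀ v, v ∉ Set.range e → r k v < r k (e i))
    (c : V → I) (hc : ∀ i, c (e i) = i) (w : V) (hw : w ∉ Set.range e) :
    ∃ S : Finset V, S.card = Fintype.card I ∧ ScDom r S ∧ S.image c = Finset.univ := by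
  classical
  by_contra hcon
  push Not at hcon
  set i0 := c w
  have hinj : Function.Injective e := fun a b h => by rw [← hc a, ← hc b, h]
  have hpos : 0 < Fintype.card I := Fintype.card_pos_iff.2 ⟨i0⟩
  let D : Finset (Finset V) := Finset.univ.filter
    (fun S => S.card + 1 = Fintype.card I ∧ S.image c = Finset.univ.erase i0)
  let R : Finset (Finset V) := Finset.univ.filter
    (fun S => S.card = Fintype.card I ∧ ScDom r S)
  let P : Finset (Σ _ : Finset V, V) := D.sigma
    (fun S => Finset.univ.filter (fun v => v ∉ S ∧ ScDom r (insert v S)))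
  let Q : Finset (Σ _ : Finset V, V) := R.sigma
    (fun S => S.filter (fun v => (S.erase v).image c = Finset.univ.erase i0))
  have hPQ : P.card = Q.card := by
    refine Finset.card_nbij' (fun p => ⟨insert p.2 p.1, p.2⟩) (fun p => ⟨p.1.erase p.2, p.2⟩)
      ?_ ?_ ?_ ?_
    · rintro ⟨S, v⟩ h
      simp only [P, Q, D, R, Finset.mem_coe, Finset.mem_sigma, Finset.mem_filter, Finset.mem_univ, true_and] at h ⊢
      obtain ⟨⟨ha, hb⟩, hv, hd⟩ := h
      refine ⟨⟨by rw [Finset.card_insert_of_notMem hv, ha], hd⟩, Finset.mem_insert_self _ _, ?_⟩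
      rw [Finset.erase_insert hv, hb]
    · rintro ⟨S, v⟩ h
      simp only [P, Q, D, R, Finset.mem_coe, Finset.mem_sigma, Finset.mem_filter, Finset.mem_univ, true_and] at h ⊢
      obtain ⟨⟨ha, hd⟩, hv, hb⟩ := h
      refine ⟨⟨by rw [Finset.card_erase_add_one hv, ha], hb⟩, Finset.notMem_erase _ _, ?_⟩
      rw [Finset.insert_erase hv]; exact hd
    · rintro ⟨S, v⟩ h
      simp only [P, D, Finset.mem_coe, Finset.mem_sigma, Finset.mem_filter, Finset.mem_univ, true_and] at h
      simp [Finset.erase_insert h.2.1]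
    · rintro ⟨S, v⟩ h
      simp only [Q, R, Finset.mem_coe, Finset.mem_sigma, Finset.mem_filter, Finset.mem_univ, true_and] at h
      simp [Finset.insert_erase h.2.1]
  have hQ : Even Q.card := by
    rw [Finset.card_sigma]
    apply Finset.even_sum
    intro S hS
    obtain ⟨ha, hd⟩ := (Finset.mem_filter.1 hS).2
    exact sperner_even c i0 S ha (hcon S ha hd)
  have hP : Odd P.card := by
    have hE : (Finset.univ.erase i0).image e ∈ D := by
      simp only [D, Finset.mem_filter, Finset.mem_univ, true_and]
      constructor
      · rw [Finset.card_image_of_injective _ hinj, Finset.card_erase_add_one (Finset.mem_univ _),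
          Finset.card_univ]
      · rw [Finset.image_image]
        have hce : c ∘ e = id := funext hc
        rw [hce, Finset.image_id]
    rw [Finset.card_sigma, ← Finset.add_sum_erase _ _ hE, outer_door r hr e h1 h2 i0 w hw]
    apply Even.one_add
    apply Finset.even_sum
    intro S hS
    obtain ⟨hSE, hS⟩ := Finset.mem_erase.1 hS
    obtain ⟨ha, hb⟩ := (Finset.mem_filter.1 hS).2
    have : ∃ u ∈ S, u ∉ Set.range e := by
      by_contra hall
      push Not at hall
      apply hSE
      ext v
      rw [← hb]
      simp only [Finset.mem_image]
      constructor
      · intro hv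
        obtain ⟨k, rfl⟩ := hall v hv
        exact ⟨k, ⟨_, hv, hc k⟩, rfl⟩
      · rintro ⟨k, ⟨x, hx, rfl⟩, rfl⟩
        obtain ⟨k, rfl⟩ := hall x hx
        rwa [hc]
    obtain ⟨u, huS, hu⟩ := this
    exact door_even r hr e h2 S ha u huS hu
  rw [hPQ] at hP
  exact (Nat.not_even_iff_odd.2 hP) hQ

theorem grid_lemma {I : Type} [Fintype I] [DecidableEq I] [Nonempty I] (N : ℕ)
    (c : (I → ℕ) → I) :
    ∃ x0 : I → ℕ, ∑ i, x0 i = N ∧ ∀ i, x0 i ≤ Fintype.card I ∨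
      ∃ x : I → ℕ, ∑ i, x i = N ∧ c x = i ∧
        ∀ k, x k ≤ x0 k + Fintype.card I ∧ x0 k ≤ x k + Fintype.card I := by
  classical
  let T := {x : I → Fin (N + 1) // ∑ i, (x i : ℕ) = N}
  let V := T ⊕ I
  let K := Fintype.card V
  let E : V ≃ Fin K := Fintype.equivFin V
  let L : I → V → ℕ := fun k v => Sum.elim (fun x : T => (x.1 k : ℕ) + 1)
    (fun i => if i = k then 0 else N + 2) v
  let r : I → V → ℕ := fun k v => L k v * K + E v
  have hlt : ∀ k u v, L k u < L k v → r k u < r k v := by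
    intro k u v h
    have h3 : (L k u + 1) * K ≤ L k v * K := Nat.mul_le_mul_right _ h
    have h4 := (E u).2
    simp only [r]
    nlinarith
  have hle : ∀ k u v, r k u ≤ r k v → L k u ≤ L k v := by
    intro k u v h
    by_contra hcon
    exact absurd (hlt k v u (not_le.1 hcon)) (not_lt.2 h)
  have hr : ∀ k, Function.Injective (r k) := by
    intro k u v h
    have h3 : L k u = L k v := le_antisymm (hle k u v h.le) (hle k v u h.ge)
    have h4 : L k u * K + (E u : ℕ) = L k v * K + E v := h
    rw [h3] at h4
    exact E.injective (Fin.ext (by omega))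
  let e : I → V := Sum.inr
  have hLe : ∀ k, L k (e k) = 0 := by intro k; simp [L, e]
  have hLe' : ∀ i k, i ≠ k → L k (e i) = N + 2 := by intro i k h; simp [L, e, h]
  have hLx : ∀ k (x : T), L k (Sum.inl x) = (x.1 k : ℕ) + 1 := by intro k x; simp [L]
  have h1 : ∀ i v, r i (e i) ≤ r i v := by
    intro i v
    rcases v with x | j
    · refine (hlt _ _ _ ?_).le
      rw [hLe, hLx]; omega
    · by_cases h : j = i
      · subst h; exact le_rfl
      · refine (hlt _ _ _ ?_).le
        have := hLe' j i h
        rw [hLe]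
        change 0 < L i (e j)
        omega
  have h2 : ∀ i k, i ≠ k → ∀ v, v ∉ Set.range e → r k v < r k (e i) := by
    intro i k hik v hv
    rcases v with x | j
    · apply hlt
      rw [hLe' i k hik, hLx]
      have := (x.1 k).2
      omega
    · exact absurd ⟨j, rfl⟩ hv
  -- points of the grid
  have mk : ∀ y : I → ℕ, ∑ i, y i = N → ∃ t : T, ∀ i, (t.1 i : ℕ) = y i := by
    intro y hy
    have hb : ∀ i, y i < N + 1 := by
      intro i
      have := Finset.single_le_sum (f := y) (fun j _ => Nat.zero_le _) (Finset.mem_univ i)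
      omega
    exact ⟨⟨fun i => ⟨y i, hb i⟩, by simpa using hy⟩, fun i => rfl⟩
  obtain ⟨i1⟩ := ‹Nonempty I›
  obtain ⟨t0, -⟩ := mk (fun i => if i = i1 then N else 0) (by simp)
  let c' : V → I := fun v => Sum.elim (fun x : T => c (fun i => (x.1 i : ℕ))) id v
  obtain ⟨S, -, hdom, himg⟩ := scarf_abstract r hr e h1 h2 c' (fun i => rfl) (Sum.inl t0)
    (by rintro ⟨j, hj⟩; cases hj)
  have hC : ∀ (y : T) i, (∀ x ∈ S, r i (Sum.inl y) ≤ r i x) → e i ∉ S := by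
    intro y i h hi
    have := hle _ _ _ (h _ hi)
    rw [hLe, hLx] at this
    omega
  have hcol : ∀ i, e i ∉ S → ∃ x : T, Sum.inl x ∈ S ∧ c (fun k => (x.1 k : ℕ)) = i := by
    intro i hi
    have : i ∈ S.image c' := by rw [himg]; exact Finset.mem_univ _
    obtain ⟨v, hv, hvi⟩ := Finset.mem_image.1 this
    rcases v with x | j
    · exact ⟨x, hv, hvi⟩
    · have : j = i := hvi
      subst this
      exact absurd hv hi
  let C : Finset I := Finset.univ.filter (fun i => e i ∉ S)
  have hCm : ∀ i, i ∈ C ↔ e i ∉ S := by intro i; simp [C]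
  obtain ⟨i2, hi2⟩ := hdom (Sum.inl t0)
  have hi2C : i2 ∈ C := (hCm _).2 (hC _ _ hi2)
  obtain ⟨x0, hx0, -⟩ := hcol i2 (hC _ _ hi2)
  have hmin : ∀ i, ∃ x : T, Sum.inl x ∈ S ∧ ∀ y : T, Sum.inl y ∈ S → (x.1 i : ℕ) ≤ y.1 i := by
    intro i
    obtain ⟨x, hx, hxm⟩ := Finset.exists_min_image
      (Finset.univ.filter (fun x : T => (Sum.inl x : V) ∈ S)) (fun x => (x.1 i : ℕ))
      ⟨x0, by simpa using hx0⟩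
    exact ⟨x, (Finset.mem_filter.1 hx).2, fun y hy => hxm y (by simpa using hy)⟩
  choose mx hmxS hmx using hmin
  let m : I → ℕ := fun i => ((mx i).1 i : ℕ)
  have hbig : N < ∑ i ∈ C, (m i + 1) := by
    by_contra hcon
    push Not at hcon
    obtain ⟨y, hy⟩ := mk (fun i => (if i ∈ C then m i + 1 else 0) +
      (if i = i2 then N - ∑ i ∈ C, (m i + 1) else 0)) (by
        rw [Finset.sum_add_distrib, Finset.sum_ite_mem, Finset.univ_inter]
        simp only [Finset.sum_ite_eq', Finset.mem_univ, if_true]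
        omega)
    obtain ⟨i, hi⟩ := hdom (Sum.inl y)
    have hiC : i ∈ C := (hCm _).2 (hC _ _ hi)
    have h3 := hle _ _ _ (hi _ (hmxS i))
    rw [hLx, hLx, hy, if_pos hiC] at h3
    simp only [m] at h3
    omega
  have hcard : C.card ≤ Fintype.card I := Finset.card_le_univ C
  rw [Finset.sum_add_distrib, Finset.sum_const, smul_eq_mul, mul_one] at hbig
  have hmC : ∀ x : T, Sum.inl x ∈ S → ∀ i ∈ C, (x.1 i : ℕ) ≤ m i + Fintype.card I := by
    intro x hx i hi
    have h3 : ∑ k ∈ C, (x.1 k : ℕ) ≤ N := by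
      exact (Finset.sum_le_sum_of_subset (Finset.subset_univ _)).trans x.2.le
    rw [← Finset.add_sum_erase _ _ hi] at h3 hbig
    have h4 : ∑ k ∈ C.erase i, m k ≤ ∑ k ∈ C.erase i, (x.1 k : ℕ) :=
      Finset.sum_le_sum fun k _ => hmx k x hx
    omega
  have hmN : ∀ x : T, Sum.inl x ∈ S → ∀ i, i ∉ C → (x.1 i : ℕ) ≤ Fintype.card I := by
    intro x hx i hi
    have h3 : ∑ k ∈ insert i C, (x.1 k : ℕ) ≤ N := by
      exact (Finset.sum_le_sum_of_subset (Finset.subset_univ _)).trans x.2.le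
    rw [Finset.sum_insert hi] at h3
    have h4 : ∑ k ∈ C, m k ≤ ∑ k ∈ C, (x.1 k : ℕ) :=
      Finset.sum_le_sum fun k _ => hmx k x hx
    omega
  have hclose : ∀ x y : T, Sum.inl x ∈ S → Sum.inl y ∈ S → ∀ k,
      (x.1 k : ℕ) ≤ y.1 k + Fintype.card I := by
    intro x y hx hy k
    by_cases hk : k ∈ C
    · have := hmC x hx k hk
      have h5 : m k ≤ y.1 k := hmx k y hy
      omega
    · have := hmN x hx k hk
      omega
  refine ⟨fun i => (x0.1 i : ℕ), x0.2, fun i => ?_⟩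
  by_cases hi : i ∈ C
  · right
    obtain ⟨x, hx, hxi⟩ := hcol i ((hCm _).1 hi)
    exact ⟨fun k => (x.1 k : ℕ), x.2, hxi, fun k => ⟨hclose x x0 hx hx0 k, hclose x0 x hx0 hx k⟩⟩
  · left; exact hmN x0 hx0 i hi

theorem approx_sym {I : Type} [Fintype I] [DecidableEq I] [Nonempty I] (M : I → I → ℝ)
    (ε : ℝ) (hε : 0 < ε) :
    ∃ z ∈ stdSimplex ℝ I, ∀ i k, min (z i) (∑ j, M k j * z j - ∑ j, M i j * z j) ≤ ε := by
  classical
  have hbest : ∀ x : I → ℕ, ∃ i, ∀ k, ∑ j, M k j * (x j : ℝ) ≤ ∑ j, M i j * (x j : ℝ) :=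
    fun x => Finite.exists_max (fun i => ∑ j, M i j * (x j : ℝ))
  choose c hc using hbest
  set n := Fintype.card I
  let B : ℝ := ∑ k, ∑ j, |M k j|
  have hB0 : 0 ≤ B := Finset.sum_nonneg fun k _ => Finset.sum_nonneg fun j _ => abs_nonneg _
  have hB : ∀ k, ∑ j, |M k j| ≤ B := fun k =>
    Finset.single_le_sum (f := fun k => ∑ j, |M k j|)
      (fun k _ => Finset.sum_nonneg fun j _ => abs_nonneg _) (Finset.mem_univ k)
  obtain ⟨N, hN⟩ := exists_nat_gt (((n : ℝ) + 2 * (n * B)) / ε)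
  have hnB : 0 ≤ (n : ℝ) * B := by positivity
  have hNpos : (0 : ℝ) < N := lt_of_le_of_lt (by positivity) hN
  rw [div_lt_iff₀ hε] at hN
  obtain ⟨x0, hsum, hx0⟩ := grid_lemma N c
  have hscale : ∀ k, ∑ j, M k j * ((x0 j : ℝ) / N) = (∑ j, M k j * (x0 j : ℝ)) / N := by
    intro k
    rw [Finset.sum_div]
    exact Finset.sum_congr rfl fun j _ => by ring
  refine ⟨fun i => (x0 i : ℝ) / N, ⟨fun i => by positivity, ?_⟩, fun i k => ?_⟩
  · rw [← Finset.sum_div, ← Nat.cast_sum, hsum]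
    exact div_self hNpos.ne'
  · rcases hx0 i with h | ⟨x, -, hci, hx⟩
    · apply min_le_of_left_le
      rw [div_le_iff₀ hNpos]
      have : (x0 i : ℝ) ≤ n := by exact_mod_cast h
      nlinarith
    · apply min_le_of_right_le
      have hd : ∀ k, |∑ j, M k j * (x j : ℝ) - ∑ j, M k j * (x0 j : ℝ)| ≤ n * B := by
        intro k
        rw [← Finset.sum_sub_distrib]
        refine (Finset.abs_sum_le_sum_abs _ _).trans ?_
        calc ∑ j, |M k j * (x j : ℝ) - M k j * (x0 j : ℝ)|
            ≤ ∑ j, |M k j| * n := by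
              refine Finset.sum_le_sum fun j _ => ?_
              rw [← mul_sub, abs_mul]
              refine mul_le_mul_of_nonneg_left ?_ (abs_nonneg _)
              have ha : (x j : ℝ) ≤ x0 j + n := by exact_mod_cast (hx j).1
              have hb : (x0 j : ℝ) ≤ x j + n := by exact_mod_cast (hx j).2
              rw [abs_le]; constructor <;> linarith
          _ = n * ∑ j, |M k j| := by rw [← Finset.sum_mul, mul_comm]
          _ ≤ n * B := mul_le_mul_of_nonneg_left (hB k) (Nat.cast_nonneg _)
      have hk := abs_le.1 (hd k)
      have hi := abs_le.1 (hd i)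
      have hb := hc x k
      rw [hci] at hb
      rw [hscale, hscale, ← sub_div, div_le_iff₀ hNpos]
      have : (0 : ℝ) ≤ n := Nat.cast_nonneg _
      nlinarith [hk.1, hi.2]

theorem exact_sym {I : Type} [Fintype I] [DecidableEq I] [Nonempty I] (M : I → I → ℝ) :
    ∃ z ∈ stdSimplex ℝ I, ∀ i k, 0 < z i → ∑ j, M k j * z j ≤ ∑ j, M i j * z j := by
  classical
  let g : (I → ℝ) → ℝ := fun z => ∑ i, ∑ k,
    max 0 (min (z i) (∑ j, M k j * z j - ∑ j, M i j * z j))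
  have hg : Continuous g := by
    simp only [g]
    fun_prop
  have hne : (stdSimplex ℝ I).Nonempty := by
    obtain ⟨z, hz, -⟩ := approx_sym M 1 one_pos
    exact ⟨z, hz⟩
  obtain ⟨z, hz, hmin⟩ := (isCompact_stdSimplex ℝ I).exists_isMinOn hne hg.continuousOn
  have hsmall : g z ≤ 0 := by
    refine le_of_forall_pos_le_add fun ε hε => ?_
    have hn : (0 : ℝ) < Fintype.card I := by exact_mod_cast Fintype.card_pos
    obtain ⟨u, hu, h⟩ := approx_sym M (ε / (Fintype.card I * Fintype.card I)) (by positivity)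
    refine (hmin hu).trans ?_
    calc g u ≤ ∑ _i : I, ∑ _k : I, ε / (Fintype.card I * Fintype.card I) := by
          refine Finset.sum_le_sum fun i _ => Finset.sum_le_sum fun k _ => ?_
          exact max_le (by positivity) (h i k)
      _ = 0 + ε := by
          simp only [Finset.sum_const, Finset.card_univ, nsmul_eq_mul]
          field_simp
          ring
  refine ⟨z, hz, fun i k hi => ?_⟩
  by_contra hcon
  push Not at hcon
  have h1 : 0 < max 0 (min (z i) (∑ j, M k j * z j - ∑ j, M i j * z j)) :=
    lt_max_of_lt_right (lt_min hi (sub_pos.2 hcon))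
  have h2 : max 0 (min (z i) (∑ j, M k j * z j - ∑ j, M i j * z j)) ≤
      ∑ k, max 0 (min (z i) (∑ j, M k j * z j - ∑ j, M i j * z j)) :=
    Finset.single_le_sum (f := fun k => max 0 (min (z i) (∑ j, M k j * z j - ∑ j, M i j * z j)))
      (fun k _ => le_max_left _ _) (Finset.mem_univ k)
  have h3 : ∑ k, max 0 (min (z i) (∑ j, M k j * z j - ∑ j, M i j * z j)) ≤ g z :=
    Finset.single_le_sum
      (f := fun i => ∑ k, max 0 (min (z i) (∑ j, M k j * z j - ∑ j, M i j * z j)))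
      (fun i _ => Finset.sum_nonneg fun k _ => le_max_left _ _) (Finset.mem_univ i)
  linarith

/-- If `p` is supported on maximizers of `a`, it maximizes the expectation of `a`. -/
theorem best_of_support {J : Type} [Fintype J] (a p q : J → ℝ) (hp : ∀ i, 0 ≤ p i)
    (hps : ∑ i, p i = 1) (hq : ∀ i, 0 ≤ q i) (hqs : ∑ i, q i = 1)
    (h : ∀ i k, 0 < p i → a k ≤ a i) : ∑ i, q i * a i ≤ ∑ i, p i * a i := by
  have h1 : ∀ k, a k ≤ ∑ i, p i * a i := by
    intro k
    calc a k = ∑ i, p i * a k := by rw [← Finset.sum_mul, hps, one_mul]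
      _ ≤ ∑ i, p i * a i := by
        refine Finset.sum_le_sum fun i _ => ?_
        rcases (hp i).eq_or_lt with h0 | h0
        · simp [← h0]
        · exact mul_le_mul_of_nonneg_left (h i k h0) h0.le
  calc ∑ i, q i * a i ≤ ∑ i, q i * ∑ i, p i * a i :=
        Finset.sum_le_sum fun i _ => mul_le_mul_of_nonneg_left (h1 i) (hq i)
    _ = _ := by rw [← Finset.sum_mul, hqs, one_mul]

/-- Equilibrium in product form for positive payoffs. -/
theorem pos_nash (l m : ℕ) (hl : 0 < l) (hm : 0 < m) (A B : Fin l → Fin m → ℝ)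
    (hA : ∀ i j, 0 < A i j) (hB : ∀ i j, 0 < B i j) :
    ∃ (x : Fin l → ℝ) (y : Fin m → ℝ),
      (∀ i, 0 ≤ x i) ∧ (∑ i, x i = 1) ∧ (∀ j, 0 ≤ y j) ∧ (∑ j, y j = 1) ∧
      (∀ i k, 0 < x i → ∑ j, A k j * y j ≤ ∑ j, A i j * y j) ∧
      (∀ j k, 0 < y j → ∑ i, B i k * x i ≤ ∑ i, B i j * x i) := by
  classical
  haveI : Nonempty (Fin l) := ⟨⟨0, hl⟩⟩
  haveI : Nonempty (Fin m) := ⟨⟨0, hm⟩⟩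
  let M : Fin l ⊕ Fin m → Fin l ⊕ Fin m → ℝ := fun p q =>
    Sum.elim (fun i => Sum.elim (fun _ => 0) (fun j => A i j) q)
      (fun j => Sum.elim (fun i => B i j) (fun _ => 0) q) p
  obtain ⟨z, ⟨hz0, hz1⟩, hz⟩ := exact_sym M
  let u : Fin l → ℝ := fun i => z (Sum.inl i)
  let v : Fin m → ℝ := fun j => z (Sum.inr j)
  have hu0 : ∀ i, 0 ≤ u i := fun i => hz0 _
  have hv0 : ∀ j, 0 ≤ v j := fun j => hz0 _
  have hsum : ∑ i, u i + ∑ j, v j = 1 := by rw [← hz1, Fintype.sum_sum_type]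
  have hM1 : ∀ i, ∑ q, M (Sum.inl i) q * z q = ∑ j, A i j * v j := by
    intro i; rw [Fintype.sum_sum_type]; simp [M, v]
  have hM2 : ∀ j, ∑ q, M (Sum.inr j) q * z q = ∑ i, B i j * u i := by
    intro i; rw [Fintype.sum_sum_type]; simp [M, u]
  have hs0 : 0 ≤ ∑ i, u i := Finset.sum_nonneg fun i _ => hu0 i
  have ht0 : 0 ≤ ∑ j, v j := Finset.sum_nonneg fun i _ => hv0 i
  have hs : 0 < ∑ i, u i := by
    refine lt_of_le_of_ne hs0 fun h => ?_
    have hall : ∀ i, u i = 0 := fun i =>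
      (Finset.sum_eq_zero_iff_of_nonneg fun i _ => hu0 i).1 h.symm i (Finset.mem_univ _)
    have : 0 < ∑ j, v j := by linarith
    obtain ⟨j, -, hj⟩ := Finset.exists_lt_of_sum_lt
      (show ∑ _j : Fin m, (0 : ℝ) < ∑ j, v j by simpa using this)
    have h3 := hz (Sum.inr j) (Sum.inl ⟨0, hl⟩) hj
    rw [hM1, hM2] at h3
    simp only [hall, mul_zero, Finset.sum_const_zero] at h3
    have h4 := Finset.single_le_sum (f := fun j => A ⟨0, hl⟩ j * v j)
      (fun j _ => mul_nonneg (hA _ j).le (hv0 j)) (Finset.mem_univ j)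
    have h5 := mul_pos (hA ⟨0, hl⟩ j) hj
    simp only [v] at h3 h4 h5
    linarith
  have ht : 0 < ∑ j, v j := by
    refine lt_of_le_of_ne ht0 fun h => ?_
    have hall : ∀ i, v i = 0 := fun i =>
      (Finset.sum_eq_zero_iff_of_nonneg fun i _ => hv0 i).1 h.symm i (Finset.mem_univ _)
    obtain ⟨i, -, hi⟩ := Finset.exists_lt_of_sum_lt
      (show ∑ _j : Fin l, (0 : ℝ) < ∑ j, u j by simpa using hs)
    have h3 := hz (Sum.inl i) (Sum.inr ⟨0, hm⟩) hi
    rw [hM1, hM2] at h3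
    simp only [hall, mul_zero, Finset.sum_const_zero] at h3
    have h4 := Finset.single_le_sum (f := fun i => B i ⟨0, hm⟩ * u i)
      (fun j _ => mul_nonneg (hB j _).le (hu0 j)) (Finset.mem_univ i)
    have h5 := mul_pos (hB i ⟨0, hm⟩) hi
    simp only [u] at h3 h4 h5
    linarith
  set s := ∑ i, u i
  set t := ∑ j, v j
  have hsc : ∀ k, ∑ j, A k j * (v j / t) = (∑ j, A k j * v j) / t := by
    intro k; rw [Finset.sum_div]; exact Finset.sum_congr rfl fun j _ => by ring
  have hsc2 : ∀ k, ∑ i, B i k * (u i / s) = (∑ i, B i k * u i) / s := by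
    intro k; rw [Finset.sum_div]; exact Finset.sum_congr rfl fun j _ => by ring
  refine ⟨fun i => u i / s, fun j => v j / t, fun i => div_nonneg (hu0 i) hs.le, ?_,
    fun j => div_nonneg (hv0 j) ht.le, ?_, ?_, ?_⟩
  · rw [← Finset.sum_div]; exact div_self hs.ne'
  · rw [← Finset.sum_div]; exact div_self ht.ne'
  · intro i k hi
    rw [hsc, hsc]
    have h3 := hz (Sum.inl i) (Sum.inl k) ((div_pos_iff_of_pos_right hs).1 hi)
    rw [hM1, hM1] at h3
    exact div_le_div_of_nonneg_right h3 ht.le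
  · intro j k hj
    rw [hsc2, hsc2]
    have h3 := hz (Sum.inr j) (Sum.inr k) ((div_pos_iff_of_pos_right ht).1 hj)
    rw [hM2, hM2] at h3
    exact div_le_div_of_nonneg_right h3 hs.le

/-- every bimatrix game has at least one Nash equilibrium in mixed
strategies. -/
theorem stmt_9 (l m : ℕ) (hl : 0 < l) (hm : 0 < m)
    (Z1 Z2 : Matrix (Fin l) (Fin m) ℝ) :
    ∃ (x : Fin l → ℝ) (y : Fin m → ℝ),
      (∀ i, 0 ≤ x i) ∧ (∑ i, x i = 1) ∧ (∀ j, 0 ≤ y j) ∧ (∑ j, y j = 1) ∧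
      (∀ x' : Fin l → ℝ, (∀ i, 0 ≤ x' i) → ∑ i, x' i = 1 →
        ∑ i, ∑ j, x' i * Z1 i j * y j ≤ ∑ i, ∑ j, x i * Z1 i j * y j) ∧
      (∀ y' : Fin m → ℝ, (∀ j, 0 ≤ y' j) → ∑ j, y' j = 1 →
        ∑ i, ∑ j, x i * Z2 i j * y' j ≤ ∑ i, ∑ j, x i * Z2 i j * y j) := by
  classical
  let W1 : ℝ := ∑ i, ∑ j, |Z1 i j|
  let W2 : ℝ := ∑ i, ∑ j, |Z2 i j|
  have hW : ∀ (Z : Matrix (Fin l) (Fin m) ℝ) i j,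
      0 < Z i j + (∑ i, ∑ j, |Z i j| + 1) := by
    intro Z i j
    have h1 : |Z i j| ≤ ∑ j, |Z i j| :=
      Finset.single_le_sum (f := fun j => |Z i j|) (fun j _ => abs_nonneg _) (Finset.mem_univ j)
    have h2 : ∑ j, |Z i j| ≤ ∑ i, ∑ j, |Z i j| :=
      Finset.single_le_sum (f := fun i => ∑ j, |Z i j|)
        (fun i _ => Finset.sum_nonneg fun j _ => abs_nonneg _) (Finset.mem_univ i)
    have h3 := neg_abs_le (Z i j)
    linarith
  obtain ⟨x, y, hx, hxs, hy, hys, h1, h2⟩ := pos_nash l m hl hm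
    (fun i j => Z1 i j + (W1 + 1)) (fun i j => Z2 i j + (W2 + 1)) (hW Z1) (hW Z2)
  simp only [add_mul _ (W1 + 1), add_mul _ (W2 + 1), Finset.sum_add_distrib,
    add_le_add_iff_right] at h1 h2
  refine ⟨x, y, hx, hxs, hy, hys, fun x' hx' hxs' => ?_, fun y' hy' hys' => ?_⟩
  · have h := best_of_support (fun i => ∑ j, Z1 i j * y j) x x' hx hxs hx' hxs' h1
    simpa only [Finset.mul_sum, mul_assoc] using h
  · have h := best_of_support (fun j => ∑ i, Z2 i j * x i) y y' hy hys hy' hys' h2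
    have hcomm : ∀ q : Fin m → ℝ, ∑ i, ∑ j, x i * Z2 i j * q j =
        ∑ j, q j * ∑ i, Z2 i j * x i := by
      intro q
      rw [Finset.sum_comm]
      refine Finset.sum_congr rfl fun j _ => ?_
      rw [Finset.mul_sum]
      exact Finset.sum_congr rfl fun i _ => by ring
    rw [hcomm, hcomm]
    exact h
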